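/- Let t ≥ 1 and a ≥ 1 be integers and let G_1, …, G_t be bipartite graphs, where G_i has bipartition (U_i, V_i) with |U_i| = |V_i| = a and the vertex sets U_1, V_1, …, U_t, V_t are pairwise disjoint. Let H be the simple graph on ∪_{i=1}^t (U_i ∪ V_i) whose edge set is the union of the edge sets of all G_i together with all pairs of distinct vertices inside V_i ∪ U_{i+1} for each i = 1, …, t-1 (i.e., each V_i ∪ U_{i+1} is made a clique). If some G_j has no perfect matching, then H has a vertex cut (L,S,R) with |S| < a. -/

import Mathlib

theorem hall_defect {W : Type*} [Fintype W] [DecidableEq W] (G : SimpleGraph W) (A B : Finset W)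
    (hAB : Disjoint A B) (hcard : A.card = B.card)
    (hbip : ∀ u v : W, G.Adj u v → (u ∈ A ∧ v ∈ B) ∨ (u ∈ B ∧ v ∈ A))
    (hno : ¬ ∃ M : G.Subgraph, M.IsMatching ∧ (↑(A ∪ B) : Set W) ⊆ M.verts) :
    ∃ X N : Finset W, X ⊆ A ∧ N ⊆ B ∧ N.card < X.card ∧
      ∀ u ∈ X, ∀ v, G.Adj u v → v ∈ N := by
  classical
  by_contra hcon
  push Not at hcon
  apply hno
  have hb : G.IsBipartiteWith (A : Set W) (B : Set W) :=
    ⟨by exact_mod_cast hAB, fun u v h => by simpa using hbip u v h⟩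
  obtain ⟨M, hM1, hM2⟩ := SimpleGraph.exists_isMatching_of_forall_ncard_le hb (by
    intro s hs
    by_contra hlt
    push Not at hlt
    obtain ⟨u, hu, v, huv, hv⟩ := hcon s.toFinset (⋃ x ∈ s, G.neighborSet x).toFinset
      (by intro x hx; exact hs (by simpa using hx))
      (by
        intro y hy
        simp only [Set.mem_toFinset, Set.mem_iUnion, SimpleGraph.mem_neighborSet] at hy
        obtain ⟨x, hx, hxy⟩ := hy
        have hxA : x ∈ A := hs hx
        rcases hbip x y hxy with h | h
        · exact h.2
        · exact absurd h.1 (Finset.disjoint_left.mp hAB hxA))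
      (by rw [← Set.ncard_eq_toFinset_card', ← Set.ncard_eq_toFinset_card']; exact hlt)
    apply hv
    simp only [Set.mem_toFinset, Set.mem_iUnion, SimpleGraph.mem_neighborSet] at hu ⊢
    exact ⟨u, hu, huv⟩)
  refine ⟨M, hM2, ?_⟩
  have hex : ∀ u : W, ∃ v, u ∈ A → M.Adj u v := by
    intro u
    by_cases hu : u ∈ A
    · obtain ⟨v, hv, _⟩ := hM2 (hM1 hu)
      exact ⟨v, fun _ => hv⟩
    · exact ⟨u, fun h => absurd h hu⟩
  choose f hf using hex
  have himg : A.image f = B := by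
    apply Finset.eq_of_subset_of_card_le
    · intro y hy
      obtain ⟨x, hx, rfl⟩ := Finset.mem_image.mp hy
      rcases hbip x _ (hf x hx).adj_sub with h | h
      · exact h.2
      · exact absurd h.1 (Finset.disjoint_left.mp hAB hx)
    · rw [Finset.card_image_of_injOn, hcard]
      intro x hx y hy hxy
      exact hM2.eq_of_adj_right (hf x hx) (by rw [hxy]; exact hf y hy)
  intro w hw
  rcases Finset.mem_union.mp (Finset.mem_coe.mp hw) with h | h
  · exact hM1 h
  · rw [← himg] at h
    obtain ⟨x, hx, rfl⟩ := Finset.mem_image.mp h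
    exact (hf x hx).snd_mem

/-- Let `G_1, …, G_t` be bipartite graphs with bipartitions `(U_i, V_i)`,
`|U_i| = |V_i| = a`, on pairwise disjoint vertex sets, and let `H` be the graph whose edges
are all edges of the `G_i` together with all pairs inside `V_i ∪ U_{i+1}` for
`i = 1, …, t-1` (each `V_i ∪ U_{i+1}` is made a clique). If some `G_j` has no perfect
matching, then `H` has a vertex cut `(L,S,R)` with `|S| < a`. -/
theorem stmt_11 {W : Type*} [Fintype W] [DecidableEq W]
    (t a : ℕ) (ht : 1 ≤ t) (ha : 1 ≤ a)
    (U V : ℕ → Finset W)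
    (hcardU : ∀ i < t, (U i).card = a) (hcardV : ∀ i < t, (V i).card = a)
    (hdisjUV : ∀ i < t, ∀ j < t, Disjoint (U i) (V j))
    (hdisjUU : ∀ i < t, ∀ j < t, i ≠ j → Disjoint (U i) (U j))
    (hdisjVV : ∀ i < t, ∀ j < t, i ≠ j → Disjoint (V i) (V j))
    (hcover : ∀ w : W, ∃ i < t, w ∈ U i ∨ w ∈ V i)
    (Gs : ℕ → SimpleGraph W)
    (hbip : ∀ i < t, ∀ u v : W, (Gs i).Adj u v →
      (u ∈ U i ∧ v ∈ V i) ∨ (u ∈ V i ∧ v ∈ U i))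
    (H : SimpleGraph W)
    (hH : ∀ u v : W, H.Adj u v ↔
      (∃ i < t, (Gs i).Adj u v) ∨
      (∃ i, i + 1 < t ∧ u ≠ v ∧ (u ∈ V i ∪ U (i + 1)) ∧ (v ∈ V i ∪ U (i + 1))))
    (j : ℕ) (hj : j < t)
    (hnopm : ¬ ∃ Mm : (Gs j).Subgraph, Mm.IsMatching ∧
      (↑(U j ∪ V j) : Set W) ⊆ Mm.verts) :
    ∃ L S R : Finset W,
      (∀ w, w ∈ L ∨ w ∈ S ∨ w ∈ R) ∧
      Disjoint L S ∧ Disjoint L R ∧ Disjoint S R ∧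
      L.Nonempty ∧ R.Nonempty ∧
      (∀ u ∈ L, ∀ v ∈ R, ¬ H.Adj u v) ∧
      S.card < a := by
  classical
  obtain ⟨X, N, hX, hN, hlt, hXN⟩ := hall_defect (Gs j) (U j) (V j) (hdisjUV j hj j hj)
    ((hcardU j hj).trans (hcardV j hj).symm) (hbip j hj) hnopm
  have dUV : ∀ i < t, ∀ k < t, ∀ w, w ∈ U i → w ∉ V k := fun i hi k hk w h =>
    Finset.disjoint_left.mp (hdisjUV i hi k hk) h
  have dUU : ∀ i < t, ∀ k < t, ∀ w, w ∈ U i → w ∈ U k → i = k := fun i hi k hk w h h' => by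
    by_contra hne
    exact Finset.disjoint_left.mp (hdisjUU i hi k hk hne) h h'
  have dVV : ∀ i < t, ∀ k < t, ∀ w, w ∈ V i → w ∈ V k → i = k := fun i hi k hk w h h' => by
    by_contra hne
    exact Finset.disjoint_left.mp (hdisjVV i hi k hk hne) h h'
  let PL : W → Prop := fun w => w ∈ X ∨ ∃ i < j, w ∈ U i ∨ w ∈ V i
  let PR : W → Prop := fun w => (w ∈ V j ∧ w ∉ N) ∨ ∃ i, j < i ∧ i < t ∧ (w ∈ U i ∨ w ∈ V i)
  have LU : ∀ i < t, ∀ w, w ∈ U i → PL w → i < j ∨ (i = j ∧ w ∈ X) := by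
    intro i hi w hw h
    rcases h with h | ⟨k, hk, h | h⟩
    · exact Or.inr ⟨dUU i hi j hj w hw (hX h), h⟩
    · exact Or.inl (dUU i hi k (hk.trans hj) w hw h ▸ hk)
    · exact absurd h (dUV i hi k (hk.trans hj) w hw)
  have LV : ∀ i < t, ∀ w, w ∈ V i → PL w → i < j := by
    intro i hi w hw h
    rcases h with h | ⟨k, hk, h | h⟩
    · exact absurd hw (dUV j hj i hi w (hX h))
    · exact absurd hw (dUV k (hk.trans hj) i hi w h)
    · exact dVV i hi k (hk.trans hj) w hw h ▸ hk
  have RU : ∀ i < t, ∀ w, w ∈ U i → PR w → j < i := by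
    intro i hi w hw h
    rcases h with h | ⟨k, hk, hkt, h | h⟩
    · exact absurd h.1 (dUV i hi j hj w hw)
    · exact dUU i hi k hkt w hw h ▸ hk
    · exact absurd h (dUV i hi k hkt w hw)
  have RV : ∀ i < t, ∀ w, w ∈ V i → PR w → j < i ∨ (i = j ∧ w ∉ N) := by
    intro i hi w hw h
    rcases h with h | ⟨k, hk, hkt, h | h⟩
    · exact Or.inr ⟨dVV i hi j hj w hw h.1, h.2⟩
    · exact absurd hw (dUV k hkt i hi w h)
    · exact Or.inl (dVV i hi k hkt w hw h ▸ hk)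
  have hXa := Finset.card_le_card hX
  have hUa := hcardU j hj
  have hVa := hcardV j hj
  refine ⟨Finset.univ.filter PL, (U j \ X) ∪ N, Finset.univ.filter PR, ?_, ?_, ?_, ?_, ?_, ?_,
    ?_, ?_⟩
  · intro w
    simp only [Finset.mem_filter, Finset.mem_univ, true_and, Finset.mem_union, Finset.mem_sdiff]
    obtain ⟨i, hi, hw⟩ := hcover w
    rcases lt_trichotomy i j with h | h | h
    · exact Or.inl (Or.inr ⟨i, h, hw⟩)
    · subst h
      by_cases h1 : w ∈ X
      · exact Or.inl (Or.inl h1)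
      by_cases h2 : w ∈ N
      · exact Or.inr (Or.inl (Or.inr h2))
      rcases hw with hw | hw
      · exact Or.inr (Or.inl (Or.inl ⟨hw, h1⟩))
      · exact Or.inr (Or.inr (Or.inl ⟨hw, h2⟩))
    · exact Or.inr (Or.inr (Or.inr ⟨i, h, hi, hw⟩))
  · rw [Finset.disjoint_left]
    intro w hw hs
    have hw := (Finset.mem_filter.mp hw).2
    rcases Finset.mem_union.mp hs with hs | hs
    · obtain ⟨h1, h2⟩ := Finset.mem_sdiff.mp hs
      rcases LU j hj w h1 hw with h | h
      · omega
      · exact h2 h.2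
    · have := LV j hj w (hN hs) hw
      omega
  · rw [Finset.disjoint_left]
    intro w hw hs
    have hw := (Finset.mem_filter.mp hw).2
    have hs := (Finset.mem_filter.mp hs).2
    obtain ⟨i, hi, h | h⟩ := hcover w
    · have := LU i hi w h hw
      have := RU i hi w h hs
      omega
    · have := LV i hi w h hw
      have := RV i hi w h hs
      omega
  · rw [Finset.disjoint_left]
    intro w hs hw
    have hw := (Finset.mem_filter.mp hw).2
    rcases Finset.mem_union.mp hs with hs | hs
    · have := RU j hj w (Finset.mem_sdiff.mp hs).1 hw
      omega
    · rcases RV j hj w (hN hs) hw with h | h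
      · omega
      · exact h.2 hs
  · obtain ⟨x, hx⟩ := Finset.card_pos.mp (lt_of_le_of_lt (Nat.zero_le _) hlt)
    exact ⟨x, Finset.mem_filter.mpr ⟨Finset.mem_univ _, Or.inl hx⟩⟩
  · obtain ⟨x, hx, hx'⟩ := Finset.exists_mem_notMem_of_card_lt_card
      (show N.card < (V j).card by omega)
    exact ⟨x, Finset.mem_filter.mpr ⟨Finset.mem_univ _, Or.inl ⟨hx, hx'⟩⟩⟩
  · intro u hu v hv hadj
    have hu := (Finset.mem_filter.mp hu).2
    have hv := (Finset.mem_filter.mp hv).2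
    rcases (hH u v).mp hadj with ⟨i, hi, h⟩ | ⟨i, hi, -, h1, h2⟩
    · rcases hbip i hi u v h with ⟨h1, h2⟩ | ⟨h1, h2⟩
      · rcases LU i hi u h1 hu with h3 | ⟨rfl, h3⟩
        · have := RV i hi v h2 hv
          omega
        · rcases RV i hi v h2 hv with h4 | h4
          · omega
          · exact h4.2 (hXN u h3 v h)
      · have := LV i hi u h1 hu
        have := RU i hi v h2 hv
        omega
    · have hi' : i < t := by omega
      have a1 : i + 1 ≤ j := by
        rcases Finset.mem_union.mp h1 with h | h
        · exact LV i hi' u h hu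
        · have := LU (i + 1) hi u h hu
          omega
      have a2 : j ≤ i := by
        rcases Finset.mem_union.mp h2 with h | h
        · have := RV i hi' v h hv
          omega
        · have := RU (i + 1) hi v h hv
          omega
      omega
  · have h1 := Finset.card_union_le (U j \ X) N
    have h2 := Finset.card_sdiff_add_card_eq_card hX
    omega
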